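/- Let K ≥ 2 be an integer and A,B integers with (A,B) not both ≡ 0 mod K, and let μ ∈ ℂ with Im μ > 0. For every γ ∈ ℂ such that θ_{[00]}(γ;μ) ≠ 0, θ_{[00]}(2γ;μ) ≠ 0, θ₁(γ;μ) ≠ 0, θ_{[AB]}(2γ;μ) ≠ 0 and θ_{[AB]}(0;μ) ≠ 0, the duplication identity 2·w_{AB}(2γ;μ)·ρ(γ;μ) = w_{AB}(γ;μ)² + 2πi·Z_{AB}(2γ;μ) holds. -/

import Mathlib

open Complex Filter

/-- Theta function with characteristics `p, q`. -/
noncomputable def Theta (p q : ℝ) (γ μ : ℂ) : ℂ :=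
  ∑' m : ℤ, Complex.exp ((Real.pi : ℂ) * Complex.I * μ * ((m : ℂ) + (p : ℂ))^2
    + 2 * (Real.pi : ℂ) * Complex.I * ((m : ℂ) + (p : ℂ)) * (γ + (q : ℂ)))

/-- The Jacobi theta function `θ₁`. -/
noncomputable def theta1 (γ μ : ℂ) : ℂ := -Theta (1/2) (1/2) γ μ

/-- Logarithmic derivative of `θ₁` in the first argument. -/
noncomputable def rho (γ μ : ℂ) : ℂ := deriv (fun z => theta1 z μ) γ / theta1 γ μ

/-- `θ_{[AB]}`, theta with characteristics `A/K - 1/2`, `1/2 - B/K`. -/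
noncomputable def thetaAB (K : ℕ) (A B : ℤ) (γ μ : ℂ) : ℂ :=
  Theta ((A : ℝ)/(K : ℝ) - 1/2) (1/2 - (B : ℝ)/(K : ℝ)) γ μ

/-- The coefficients `w_{AB}` of the elliptic r-matrix. -/
noncomputable def wAB (K : ℕ) (A B : ℤ) (γ μ : ℂ) : ℂ :=
  thetaAB K A B γ μ * deriv (fun z => thetaAB K 0 0 z μ) 0
    / (thetaAB K A B 0 μ * thetaAB K 0 0 γ μ)

/-- The functions `Z_{AB}`. -/
noncomputable def ZAB (K : ℕ) (A B : ℤ) (γ μ : ℂ) : ℂ :=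
  wAB K A B γ μ / (2 * (Real.pi : ℂ) * Complex.I) *
    (deriv (fun z => thetaAB K A B z μ) γ / thetaAB K A B γ μ
      - deriv (fun z => thetaAB K A B z μ) 0 / thetaAB K A B 0 μ)

/-- `ε = exp(2πi/K)`. -/
noncomputable def epsK (K : ℕ) : ℂ := Complex.exp (2 * (Real.pi : ℂ) * Complex.I / (K : ℂ))

/-- The diagonal matrix `F = diag(1, ε, …, ε^{K-1})`. -/
noncomputable def Fmat (K : ℕ) : Matrix (Fin K) (Fin K) ℂ :=
  Matrix.diagonal (fun i => epsK K ^ (i : ℕ))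

/-- The cyclic permutation matrix `H`. -/
def Hmat (K : ℕ) : Matrix (Fin K) (Fin K) ℂ :=
  Matrix.of fun i j => if (j : ℕ) = ((i : ℕ) + 1) % K then 1 else 0

/-- `σ_{AB} = H^A F^B` (indices taken mod `K`, using `H^K = F^K = 1`). -/
noncomputable def sigmaAB (K : ℕ) (A B : ℤ) : Matrix (Fin K) (Fin K) ℂ :=
  Hmat K ^ ((A % (K : ℤ)).toNat) * Fmat K ^ ((B % (K : ℤ)).toNat)

/-- The dual basis `σ^{AB} = (ε^{-AB}/K)·σ_{-A,-B}`. -/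
noncomputable def sigmaDualAB (K : ℕ) (A B : ℤ) : Matrix (Fin K) (Fin K) ℂ :=
  (epsK K ^ (-(A * B)) / (K : ℂ)) • sigmaAB K (-A) (-B)

open Kronecker in
/-- The elliptic r-matrix. -/
noncomputable def rmat (K : ℕ) (γ μ : ℂ) : Matrix (Fin K × Fin K) (Fin K × Fin K) ℂ :=
  ∑ A ∈ Finset.range K, ∑ B ∈ Finset.range K,
    if A = 0 ∧ B = 0 then 0
    else wAB K A B γ μ • (sigmaAB K A B ⊗ₖ sigmaDualAB K A B)

/-!
The function `θ₁` satisfies Weierstrass' three-term identity. Indeed, reindexing the double series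
of `θ₁ (x + y) θ₁ (x - y)` by the half sum and half difference of the summation indices writes it as
`f x * g y - g x * f y`, a `2 × 2` determinant, and such determinants satisfy a Plücker relation.

Differentiating the relation between the points `a, γ, γ + u, 0` in `a` at `a = γ` gives a
duplication formula for `F z u = θ₁' 0 * θ₁ (z + u) / (θ₁ z * θ₁ u)`. A theta function with
characteristics is, up to an exponential factor, a translate of `θ₁`, so `w` is `F` times an
exponential. That exponential is squared when `γ` is doubled, hence scales out of the formula.
-/

open scoped Real

/-- Weierstrass' three-term identity (the genus-one Fay identity), satisfied by the Weierstrass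
sigma function and by odd theta functions. -/
def ThreeTermIdentity {R : Type*} [CommRing R] (T : R → R) : Prop :=
  ∀ a b c d, T (a + b) * T (a - b) * (T (c + d) * T (c - d))
    - T (a + c) * T (a - c) * (T (b + d) * T (b - d))
    + T (a + d) * T (a - d) * (T (b + c) * T (b - c)) = 0

/-- The Kronecker function `F(z, u)` built from an odd function `T` with a simple zero at `0`,
normalised to have residue `1` at `z = 0`. -/
noncomputable def kroneckerFun {𝕜 : Type*} [NontriviallyNormedField 𝕜] (T : 𝕜 → 𝕜) (z u : 𝕜) : 𝕜 :=
  deriv T 0 * T (z + u) / (T z * T u)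

lemma threeTermIdentity_of_add_mul_sub {R : Type*} [CommRing R] {T f g : R → R}
    (h : ∀ x y, T (x + y) * T (x - y) = f x * g y - g x * f y) : ThreeTermIdentity T := by
  intro a b c d
  simp only [h]
  ring

namespace ThreeTermIdentity

variable {𝕜 : Type*} [NontriviallyNormedField 𝕜] {T : 𝕜 → 𝕜}

lemma deriv_left (hT : ThreeTermIdentity T) (hd : Differentiable 𝕜 T) (a b c d : 𝕜) :
    (deriv T (a + b) * T (a - b) + T (a + b) * deriv T (a - b)) * (T (c + d) * T (c - d))
      - (deriv T (a + c) * T (a - c) + T (a + c) * deriv T (a - c)) * (T (b + d) * T (b - d))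
      + (deriv T (a + d) * T (a - d) + T (a + d) * deriv T (a - d)) * (T (b + c) * T (b - c))
      = 0 := by
  have hprod (y : 𝕜) : HasDerivAt (fun x ↦ T (x + y) * T (x - y))
      (deriv T (a + y) * T (a - y) + T (a + y) * deriv T (a - y)) a :=
    ((hd (a + y)).hasDerivAt.comp_add_const a y).mul ((hd (a - y)).hasDerivAt.comp_sub_const a y)
  have hsum := (((hprod b).mul_const (T (c + d) * T (c - d))).sub
    ((hprod c).mul_const (T (b + d) * T (b - d)))).add
    ((hprod d).mul_const (T (b + c) * T (b - c)))
  refine hsum.unique ?_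
  convert hasDerivAt_const a (0 : 𝕜) using 1
  exact funext fun x ↦ hT x b c d

lemma deriv_zero_mul_eq [CharZero 𝕜] (hT : ThreeTermIdentity T) (hodd : T.Odd)
    (hd : Differentiable 𝕜 T) (γ u : 𝕜) :
    deriv T 0 * T (2 * γ) * T (γ + u) ^ 2 =
      2 * T (2 * γ + u) * T u * deriv T γ * T γ
        - T γ ^ 2 * (deriv T (2 * γ + u) * T u - T (2 * γ + u) * deriv T u) := by
  have deriv_neg : deriv T (-u) = deriv T u := by
    have h := deriv_comp_neg T u
    rw [funext hodd, deriv.fun_neg] at h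
    exact (neg_injective h).symm
  have h := hT.deriv_left hd γ γ (γ + u) 0
  rw [show γ + (γ + u) = 2 * γ + u by ring, show γ - (γ + u) = -u by ring, ← two_mul, sub_self,
    hodd.map_zero, hodd u, deriv_neg] at h
  simp only [add_zero, sub_zero] at h
  linear_combination h

theorem kroneckerFun_duplication [CharZero 𝕜] (hT : ThreeTermIdentity T) (hodd : T.Odd)
    (hd : Differentiable 𝕜 T) {γ u : 𝕜} (hγ : T γ ≠ 0) (h2γ : T (2 * γ) ≠ 0) (hu : T u ≠ 0)
    (h2γu : T (2 * γ + u) ≠ 0) :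
    2 * kroneckerFun T (2 * γ) u * logDeriv T γ =
      kroneckerFun T γ u ^ 2
        + kroneckerFun T (2 * γ) u * (logDeriv T (2 * γ + u) - logDeriv T u) := by
  simp only [kroneckerFun, logDeriv_apply]
  field_simp
  linear_combination (-deriv T 0) * hT.deriv_zero_mul_eq hodd hd γ u

end ThreeTermIdentity

lemma bijective_sumElim_add_sub : Function.Bijective (Sum.elim
    (fun p : ℤ × ℤ ↦ (p.1 + p.2, p.1 - p.2)) fun p : ℤ × ℤ ↦ (p.1 + p.2 + 1, p.1 - p.2)) := by
  constructor
  · rintro (⟨j, k⟩ | ⟨j, k⟩) (⟨j', k'⟩ | ⟨j', k'⟩) h <;>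
      simp only [Sum.elim_inl, Sum.elim_inr, Prod.mk.injEq, Sum.inl.injEq, Sum.inr.injEq,
        reduceCtorEq] at h ⊢ <;> omega
  · rintro ⟨m, n⟩
    obtain ⟨k, hk | hk⟩ := Int.even_or_odd' (m - n)
    · exact ⟨.inl (m - k, k), by simp only [Sum.elim_inl, Prod.mk.injEq]; omega⟩
    · exact ⟨.inr (m - 1 - k, k), by simp only [Sum.elim_inr, Prod.mk.injEq]; omega⟩

lemma hasSum_of_hasSum_add_sub {M : Type*} [AddCommMonoid M] [TopologicalSpace M] [ContinuousAdd M]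
    {F : ℤ × ℤ → M} {a b : M} (h₀ : HasSum (fun p : ℤ × ℤ ↦ F (p.1 + p.2, p.1 - p.2)) a)
    (h₁ : HasSum (fun p : ℤ × ℤ ↦ F (p.1 + p.2 + 1, p.1 - p.2)) b) : HasSum F (a + b) :=
  (Equiv.ofBijective _ bijective_sumElim_add_sub).hasSum_iff.1 (HasSum.sum h₀ h₁)

lemma logDeriv_const_mul_exp_mul {f : ℂ → ℂ} {C a z : ℂ} (hC : C ≠ 0) (hz : f z ≠ 0)
    (hf : DifferentiableAt ℂ f z) :
    logDeriv (fun x ↦ C * exp (a * x) * f x) z = a + logDeriv f z := by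
  have hexp : logDeriv (fun x ↦ exp (a * x)) z = a := by
    rw [logDeriv_apply, (hasDerivAt_const_mul a).cexp.deriv,
      mul_div_cancel_left₀ _ (exp_ne_zero _)]
  simp_rw [mul_assoc]
  rw [logDeriv_const_mul z C hC, logDeriv_mul (f := fun x ↦ exp (a * x)) z (exp_ne_zero _) hz
    (by fun_prop) hf, hexp]

/-- The summand of index `m` in the series defining `Theta p q z μ`. -/
noncomputable def thetaTerm (p q : ℝ) (z μ : ℂ) (m : ℤ) : ℂ :=
  exp (π * I * μ * (m + p) ^ 2 + 2 * π * I * (m + p) * (z + q))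

lemma Theta_eq_tsum (p q : ℝ) (z μ : ℂ) : Theta p q z μ = ∑' m, thetaTerm p q z μ m := rfl

lemma thetaTerm_eq_exp_mul_jacobiTheta₂_term (p q : ℝ) (z μ : ℂ) (m : ℤ) :
    thetaTerm p q z μ m = exp (π * I * μ * p ^ 2 + 2 * π * I * p * (z + q)) *
      jacobiTheta₂_term m (z + q + p * μ) μ := by
  rw [thetaTerm, jacobiTheta₂_term, ← exp_add]
  ring_nf

lemma Theta_eq_exp_mul_jacobiTheta₂ (p q : ℝ) (z μ : ℂ) :
    Theta p q z μ = exp (π * I * μ * p ^ 2 + 2 * π * I * p * (z + q)) *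
      jacobiTheta₂ (z + q + p * μ) μ := by
  simp_rw [Theta_eq_tsum, thetaTerm_eq_exp_mul_jacobiTheta₂_term, tsum_mul_left, jacobiTheta₂]

lemma hasSum_thetaTerm (p q : ℝ) (z : ℂ) {μ : ℂ} (hμ : 0 < μ.im) :
    HasSum (thetaTerm p q z μ) (Theta p q z μ) := by
  rw [Theta_eq_exp_mul_jacobiTheta₂, funext (thetaTerm_eq_exp_mul_jacobiTheta₂_term p q z μ)]
  exact (hasSum_jacobiTheta₂_term _ hμ).mul_left _

lemma differentiable_Theta (p q : ℝ) {μ : ℂ} (hμ : 0 < μ.im) :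
    Differentiable ℂ (Theta p q · μ) := by
  have hjacobi : Differentiable ℂ (jacobiTheta₂ · μ) :=
    fun z ↦ differentiableAt_jacobiTheta₂_fst z hμ
  simp_rw [Theta_eq_exp_mul_jacobiTheta₂]
  fun_prop

lemma Theta_neg (p q : ℝ) (z μ : ℂ) : Theta p q (-z) μ = Theta (-p) (-q) z μ := by
  rw [Theta_eq_exp_mul_jacobiTheta₂, Theta_eq_exp_mul_jacobiTheta₂, ← jacobiTheta₂_neg_left]
  push_cast
  ring_nf

lemma Theta_add_one_left (p q : ℝ) (z μ : ℂ) : Theta (p + 1) q z μ = Theta p q z μ := by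
  rw [Theta_eq_tsum, Theta_eq_tsum, ← (Equiv.addRight (1 : ℤ)).tsum_eq (thetaTerm p q z μ)]
  refine tsum_congr fun m ↦ ?_
  simp only [thetaTerm, Equiv.coe_addRight]
  push_cast
  ring_nf

lemma Theta_add_one_right (p q : ℝ) (z μ : ℂ) :
    Theta p (q + 1) z μ = exp (2 * π * I * p) * Theta p q z μ := by
  rw [Theta_eq_tsum, Theta_eq_tsum, ← tsum_mul_left]
  refine tsum_congr fun m ↦ ?_
  rw [thetaTerm, thetaTerm, ← exp_add, ← mul_one (exp (2 * π * I * p + _)),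
    ← exp_int_mul_two_pi_mul_I m, ← exp_add]
  push_cast
  ring_nf

lemma Theta_half_add_one_right (q : ℝ) (z μ : ℂ) :
    Theta (1 / 2) (q + 1) z μ = -Theta (1 / 2) q z μ := by
  have hexp : exp (2 * π * I * (1 / 2 : ℝ)) = -1 := by
    rw [← exp_pi_mul_I]
    push_cast
    ring_nf
  rw [Theta_add_one_right, hexp, neg_one_mul]

lemma Theta_add_add_eq_exp_mul (p q p₀ q₀ : ℝ) (z μ : ℂ) :
    Theta (p₀ + p) (q₀ + q) z μ =
      exp (π * I * μ * p ^ 2 + 2 * π * I * p * (z + q₀ + q)) *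
        Theta p₀ q₀ (z + (p * μ + q)) μ := by
  rw [Theta_eq_tsum, Theta_eq_tsum, ← tsum_mul_left]
  refine tsum_congr fun m ↦ ?_
  rw [thetaTerm, thetaTerm, ← exp_add]
  push_cast
  ring_nf

lemma thetaTerm_add_mul_thetaTerm_sub (p₁ q₁ p₂ q₂ : ℝ) (x y μ : ℂ) (s j k : ℤ) :
    thetaTerm p₁ q₁ (x + y) μ (j + k + s) * thetaTerm p₂ q₂ (x - y) μ (j - k) =
      thetaTerm ((p₁ + p₂ + s) / 2) (q₁ + q₂) (2 * x) (2 * μ) j *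
        thetaTerm ((p₁ - p₂ + s) / 2) (q₁ - q₂) (2 * y) (2 * μ) k := by
  simp only [thetaTerm, ← exp_add]
  push_cast
  ring_nf

theorem Theta_add_mul_Theta_sub (p₁ q₁ p₂ q₂ : ℝ) (x y : ℂ) {μ : ℂ} (hμ : 0 < μ.im) :
    Theta p₁ q₁ (x + y) μ * Theta p₂ q₂ (x - y) μ =
      Theta ((p₁ + p₂) / 2) (q₁ + q₂) (2 * x) (2 * μ) *
          Theta ((p₁ - p₂) / 2) (q₁ - q₂) (2 * y) (2 * μ)
        + Theta ((p₁ + p₂ + 1) / 2) (q₁ + q₂) (2 * x) (2 * μ) *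
          Theta ((p₁ - p₂ + 1) / 2) (q₁ - q₂) (2 * y) (2 * μ) := by
  have hasSum_mul (p q p' q' : ℝ) (z z' : ℂ) {τ : ℂ} (hτ : 0 < τ.im) :
      HasSum (fun m : ℤ × ℤ ↦ thetaTerm p q z τ m.1 * thetaTerm p' q' z' τ m.2)
        (Theta p q z τ * Theta p' q' z' τ) :=
    have h := hasSum_thetaTerm p q z hτ
    have h' := hasSum_thetaTerm p' q' z' hτ
    h.mul h' (summable_mul_of_summable_norm h.summable.norm h'.summable.norm)
  have h2μ : 0 < (2 * μ).im := by simpa using hμ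
  refine (hasSum_mul p₁ q₁ p₂ q₂ (x + y) (x - y) hμ).unique (hasSum_of_hasSum_add_sub ?_ ?_)
  · convert hasSum_mul _ _ _ _ _ _ h2μ using 2 with m
    simpa using thetaTerm_add_mul_thetaTerm_sub p₁ q₁ p₂ q₂ x y μ 0 m.1 m.2
  · convert hasSum_mul _ _ _ _ _ _ h2μ using 2 with m
    simpa using thetaTerm_add_mul_thetaTerm_sub p₁ q₁ p₂ q₂ x y μ 1 m.1 m.2

lemma differentiable_theta1 {μ : ℂ} (hμ : 0 < μ.im) : Differentiable ℂ (theta1 · μ) :=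
  (differentiable_Theta _ _ hμ).neg

lemma theta1_odd (μ : ℂ) : (theta1 · μ).Odd := by
  intro z
  have hleft := Theta_add_one_left (-(1 / 2)) (-(1 / 2)) z μ
  have hright := Theta_half_add_one_right (-(1 / 2)) z μ
  rw [show -(1 / 2) + 1 = (1 / 2 : ℝ) by norm_num] at hleft hright
  change -Theta (1 / 2) (1 / 2) (-z) μ = - -Theta (1 / 2) (1 / 2) z μ
  rw [Theta_neg, ← hleft, hright, neg_neg]

lemma theta1_add_mul_theta1_sub (x y : ℂ) {μ : ℂ} (hμ : 0 < μ.im) :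
    theta1 (x + y) μ * theta1 (x - y) μ =
      Theta 0 0 (2 * x) (2 * μ) * Theta (1 / 2) 0 (2 * y) (2 * μ)
        - Theta (1 / 2) 0 (2 * x) (2 * μ) * Theta 0 0 (2 * y) (2 * μ) := by
  have hleft := Theta_add_one_left 0 1 (2 * x) (2 * μ)
  have hright₀ := Theta_add_one_right 0 0 (2 * x) (2 * μ)
  have hright₁ := Theta_half_add_one_right 0 (2 * x) (2 * μ)
  simp only [zero_add, ofReal_zero, mul_zero, exp_zero, one_mul] at hleft hright₀ hright₁
  have hadd := Theta_add_mul_Theta_sub (1 / 2) (1 / 2) (1 / 2) (1 / 2) x y hμ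
  rw [add_halves, sub_self, zero_div, zero_add, add_self_div_two, hleft, hright₀, hright₁] at hadd
  rw [theta1, theta1, neg_mul_neg, hadd]
  ring

lemma threeTermIdentity_theta1 {μ : ℂ} (hμ : 0 < μ.im) : ThreeTermIdentity (theta1 · μ) :=
  threeTermIdentity_of_add_mul_sub fun x y ↦ theta1_add_mul_theta1_sub x y hμ

/-- The translation `u` for which `Theta p q z μ` is an exponential in `z` times
`theta1 (z + u) μ`. -/
noncomputable def thetaShift (p q : ℝ) (μ : ℂ) : ℂ :=
  (p - 1 / 2 : ℝ) * μ + (q - 1 / 2 : ℝ)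

lemma exists_Theta_eq_mul_theta1 (p q : ℝ) (μ : ℂ) : ∃ C ≠ 0, ∀ z,
    Theta p q z μ = C * exp (2 * π * I * (p - 1 / 2) * z) * theta1 (z + thetaShift p q μ) μ := by
  refine ⟨-exp (π * I * μ * (p - 1 / 2) ^ 2 + 2 * π * I * (p - 1 / 2) * q),
    neg_ne_zero.2 (exp_ne_zero _), fun z ↦ ?_⟩
  have h := Theta_add_add_eq_exp_mul (p - 1 / 2) (q - 1 / 2) (1 / 2) (1 / 2) z μ
  rw [add_sub_cancel, add_sub_cancel] at h
  rw [h, theta1, thetaShift, neg_mul, neg_mul_neg, ← exp_add]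
  push_cast
  ring_nf

/-- The function `w` of the elliptic `r`-matrix for arbitrary real characteristics `p`, `q`;
`w_{AB}` is the case `p = A / K - 1 / 2`, `q = 1 / 2 - B / K`. The function `θ_{[00]}` occurring in
the latter is replaced by `θ₁ = -θ_{[00]}`, the two signs cancelling. -/
noncomputable def wChar (p q : ℝ) (γ μ : ℂ) : ℂ :=
  Theta p q γ μ * deriv (theta1 · μ) 0 / (Theta p q 0 μ * theta1 γ μ)

lemma wChar_eq_exp_mul_kroneckerFun (p q : ℝ) (γ μ : ℂ) :
    wChar p q γ μ = exp (2 * π * I * (p - 1 / 2) * γ) *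
      kroneckerFun (theta1 · μ) γ (thetaShift p q μ) := by
  obtain ⟨C, hC, h⟩ := exists_Theta_eq_mul_theta1 p q μ
  simp only [wChar, kroneckerFun, h, mul_zero, exp_zero, mul_one, zero_add]
  rw [mul_assoc C, mul_assoc C, mul_assoc C, mul_div_mul_left _ _ hC]
  ring

lemma Theta_eq_zero_iff (p q : ℝ) (z μ : ℂ) :
    Theta p q z μ = 0 ↔ theta1 (z + thetaShift p q μ) μ = 0 := by
  obtain ⟨C, hC, h⟩ := exists_Theta_eq_mul_theta1 p q μ
  simp [h, hC]

lemma logDeriv_Theta (p q : ℝ) {z μ : ℂ} (hμ : 0 < μ.im) (hz : Theta p q z μ ≠ 0) :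
    logDeriv (Theta p q · μ) z =
      2 * π * I * (p - 1 / 2) + logDeriv (theta1 · μ) (z + thetaShift p q μ) := by
  obtain ⟨C, hC, h⟩ := exists_Theta_eq_mul_theta1 p q μ
  have hd := differentiable_theta1 hμ
  rw [Ne, Theta_eq_zero_iff] at hz
  rw [funext h, logDeriv_const_mul_exp_mul (f := fun x ↦ theta1 (x + thetaShift p q μ) μ) hC hz
    (by fun_prop), logDeriv_apply, logDeriv_apply, deriv_comp_add_const (theta1 · μ)]

theorem wAB_duplication_general (p q : ℝ) {μ γ : ℂ} (hμ : 0 < μ.im) (hγ : theta1 γ μ ≠ 0)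
    (h2γ : theta1 (2 * γ) μ ≠ 0) (hΘ2γ : Theta p q (2 * γ) μ ≠ 0) (hΘ0 : Theta p q 0 μ ≠ 0) :
    2 * wChar p q (2 * γ) μ * rho γ μ =
      wChar p q γ μ ^ 2 + wChar p q (2 * γ) μ *
        (logDeriv (Theta p q · μ) (2 * γ) - logDeriv (Theta p q · μ) 0) := by
  have hexp : exp (2 * π * I * (p - 1 / 2) * (2 * γ)) = exp (2 * π * I * (p - 1 / 2) * γ) ^ 2 := by
    rw [← exp_nat_mul]
    ring_nf
  have hrho : rho γ μ = logDeriv (theta1 · μ) γ := rfl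
  rw [logDeriv_Theta p q hμ hΘ2γ, logDeriv_Theta p q hμ hΘ0]
  rw [Ne, Theta_eq_zero_iff] at hΘ2γ hΘ0
  rw [zero_add] at hΘ0 ⊢
  have hF := (threeTermIdentity_theta1 hμ).kroneckerFun_duplication (theta1_odd μ)
    (differentiable_theta1 hμ) hγ h2γ hΘ0 hΘ2γ
  simp only [wChar_eq_exp_mul_kroneckerFun, hexp, hrho]
  linear_combination exp (2 * π * I * (p - 1 / 2) * γ) ^ 2 * hF

lemma thetaAB_zero_zero (K : ℕ) (z μ : ℂ) : thetaAB K 0 0 z μ = -theta1 z μ := by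
  have h := Theta_add_one_left (-(1 / 2)) (1 / 2) z μ
  rw [show -(1 / 2) + 1 = (1 / 2 : ℝ) by norm_num] at h
  simp only [thetaAB, theta1, h, Int.cast_zero, zero_div, zero_sub, sub_zero, neg_neg]

lemma wAB_eq_wChar (K : ℕ) (A B : ℤ) (γ μ : ℂ) :
    wAB K A B γ μ = wChar (A / K - 1 / 2) (1 / 2 - B / K) γ μ := by
  simp only [wAB, wChar, thetaAB_zero_zero, deriv.fun_neg, mul_neg, neg_div_neg_eq]
  rfl

lemma two_pi_I_mul_ZAB (K : ℕ) (A B : ℤ) (γ μ : ℂ) :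
    2 * π * I * ZAB K A B γ μ =
      wAB K A B γ μ * (logDeriv (thetaAB K A B · μ) γ - logDeriv (thetaAB K A B · μ) 0) := by
  rw [ZAB, ← mul_assoc, mul_div_cancel₀ _ two_pi_I_ne_zero]
  rfl

/-- the duplication identity
`2·w_{AB}(2γ)·ρ(γ) = w_{AB}(γ)² + 2πi·Z_{AB}(2γ)`. -/
theorem wAB_duplication (K : ℕ) (hK : 2 ≤ K) (A B : ℤ)
    (hAB : ¬(A % (K : ℤ) = 0 ∧ B % (K : ℤ) = 0)) (μ γ : ℂ) (hμ : 0 < μ.im)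
    (h1 : thetaAB K 0 0 γ μ ≠ 0) (h2 : thetaAB K 0 0 (2 * γ) μ ≠ 0)
    (h3 : theta1 γ μ ≠ 0) (h4 : thetaAB K A B (2 * γ) μ ≠ 0)
    (h5 : thetaAB K A B 0 μ ≠ 0) :
    2 * wAB K A B (2 * γ) μ * rho γ μ
      = (wAB K A B γ μ)^2 + 2 * (Real.pi : ℂ) * Complex.I * ZAB K A B (2 * γ) μ := by
  rw [two_pi_I_mul_ZAB, wAB_eq_wChar, wAB_eq_wChar]
  exact wAB_duplication_general _ _ hμ h3 (by rwa [thetaAB_zero_zero, neg_ne_zero] at h2) h4 h5
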